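/- arXiv:2207.03594 — 2 statements merged into one kernel-verified Lean document; each statement's English description precedes it below -/
import Mathlib

section
/- Fix d ≥ 2 and a fraction p/q in lowest terms with q ≥ 2, 1 ≤ p ≤ q−1, gcd(p,q) = 1, and let p* be the multiplicative inverse of p in ℤ/qℤ. Let t = (a_0, a_1, ..., a_{q-1}) be a point of T given as a q-tuple of digits in {0,...,d−1}, and let O be the orbit of t under σ_d. Then t is the least element of O and O is a σ_d-rotational orbit with rotation number p/q if and only if a_0 ≤ a_{p*} ≤ a_{2p*} ≤ ... ≤ a_{(q-1)p*} (a chain of inequalities between consecutive terms a_{k p*} and a_{(k+1)p*} for k = 0, ..., q−2, with digit indices in ℤ/qℤ), where the inequality between a_{k p*} and a_{(k+1)p*} is strict for k = q−p−1, i.e. a_{-(p+1)p*} < a_{-p·p*}. -/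
/-- The angle-multiplying map `σ_d : 𝕋 → 𝕋`, where the circle `𝕋 = ℝ/ℤ` is identified with
the set of representatives `[0,1) ⊆ ℝ` (and so ordered by comparing these representatives). -/
noncomputable def sigmad (d : ℕ) (t : ℝ) : ℝ := Int.fract (d * t)

/-- The orbit of a point of the circle under `σ_d`. -/
def sigmaOrbit (d : ℕ) (t : ℝ) : Set ℝ := {s | ∃ k : ℕ, (sigmad d)^[k] t = s}

/-- `t : ZMod q → ℝ` lists (with indices viewed in `ℤ/qℤ`) the elements
`t 0 < t 1 < ⋯ < t (q-1)` of a `σ_d`-rotational set with rotation number `p/q`. -/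
def IsRotational (d q : ℕ) (p : ZMod q) (t : ZMod q → ℝ) : Prop :=
  (∀ i, t i ∈ Set.Ico (0:ℝ) 1) ∧
  (∀ i j : ZMod q, i.val < j.val → t i < t j) ∧
  p ≠ 0 ∧
  ∀ i, sigmad d (t i) = t (i + p)

/-- The point of the circle with repeating base-`d` expansion `0.‾(a_0 a_1 … a_{q-1})`. -/
noncomputable def tuplePoint (d q : ℕ) (a : ZMod q → ℕ) : ℝ :=
  Int.fract ((∑ i ∈ Finset.range q, (a (i : ZMod q) : ℝ) * (d : ℝ) ^ (q - 1 - i)) /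
    ((d : ℝ) ^ q - 1))

/-- The value of the repeating expansion whose digits start at index `j`. -/
noncomputable def yval (d q : ℕ) (a : ZMod q → ℕ) (j : ZMod q) : ℝ :=
  (∑ i ∈ Finset.range q, (a (j + (i : ZMod q)) : ℝ) * (d : ℝ) ^ (q - 1 - i)) /
    ((d : ℝ) ^ q - 1)

lemma pow_sub_pos (d q : ℕ) (hd : 2 ≤ d) (hq : 2 ≤ q) : (0:ℝ) < (d : ℝ) ^ q - 1 := by
  have h1 : (1:ℝ) < d := by exact_mod_cast hd
  have := one_lt_pow₀ h1 (n := q) (by omega)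
  linarith

lemma tuplePoint_eq (d q : ℕ) (a : ZMod q → ℕ) : tuplePoint d q a = Int.fract (yval d q a 0) := by
  simp [tuplePoint, yval]

lemma yval_rec (d q : ℕ) (hd : 2 ≤ d) (hq : 2 ≤ q) (a : ZMod q → ℕ) (j : ZMod q) :
    (d : ℝ) * yval d q a j = a j + yval d q a (j + 1) := by
  have hpos := pow_sub_pos d q hd hq
  unfold yval
  obtain ⟨n, rfl⟩ : ∃ n, q = n + 1 := ⟨q - 1, by omega⟩
  rw [← sub_eq_iff_eq_add, ← mul_div_assoc, ← sub_div, div_eq_iff hpos.ne']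
  rw [Finset.sum_range_succ', Finset.sum_range_succ (n := n), mul_add, Finset.mul_sum]
  have h : ∑ i ∈ Finset.range n, (d : ℝ) * ((a (j + ((i + 1 : ℕ) : ZMod (n + 1))) : ℝ) *
        (d : ℝ) ^ (n + 1 - 1 - (i + 1))) =
      ∑ i ∈ Finset.range n, (a (j + 1 + (i : ZMod (n + 1))) : ℝ) * (d : ℝ) ^ (n + 1 - 1 - i) := by
    refine Finset.sum_congr rfl fun i hi => ?_
    have hi' := Finset.mem_range.1 hi
    rw [show n + 1 - 1 - i = (n + 1 - 1 - (i + 1)) + 1 by omega, pow_succ,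
      show j + ((i + 1 : ℕ) : ZMod (n + 1)) = j + 1 + i by push_cast; ring]
    ring
  have h2 : j + 1 + (n : ZMod (n + 1)) = j := by
    have : ((n + 1 : ℕ) : ZMod (n + 1)) = 0 := ZMod.natCast_self _
    push_cast at this
    rw [add_assoc, add_comm 1, this, add_zero]
  rw [h, h2]
  simp
  ring

lemma yval_nonneg (d q : ℕ) (hd : 2 ≤ d) (hq : 2 ≤ q) (a : ZMod q → ℕ) (j : ZMod q) :
    0 ≤ yval d q a j := by
  have hpos := pow_sub_pos d q hd hq
  unfold yval
  positivity

lemma yval_le_one (d q : ℕ) (hd : 2 ≤ d) (hq : 2 ≤ q) (a : ZMod q → ℕ) (ha : ∀ j, a j < d)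
    (j : ZMod q) : yval d q a j ≤ 1 := by
  have : NeZero q := ⟨by omega⟩
  obtain ⟨m, hm⟩ := Finite.exists_max (yval d q a)
  have h1 := yval_rec d q hd hq a m
  have h2 := hm (m + 1)
  have h3 : (a m : ℝ) + 1 ≤ d := by exact_mod_cast ha m
  have h4 : (2:ℝ) ≤ d := by exact_mod_cast hd
  refine (hm j).trans ?_
  by_contra! h
  nlinarith

lemma yval_all (d q : ℕ) (hd : 2 ≤ d) (hq : 2 ≤ q) (a : ZMod q → ℕ) (ha : ∀ j, a j < d)
    (j : ZMod q) (h : yval d q a j = 1) (i : ZMod q) : yval d q a i = 1 ∧ a i + 1 = d := by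
  have : NeZero q := ⟨by omega⟩
  have key : ∀ j, yval d q a j = 1 → yval d q a (j + 1) = 1 ∧ a j + 1 = d := by
    intro j h
    have h1 := yval_rec d q hd hq a j
    have h2 := yval_le_one d q hd hq a ha (j + 1)
    have h3 : (a j : ℝ) + 1 ≤ d := by exact_mod_cast ha j
    rw [h] at h1
    refine ⟨by linarith, ?_⟩
    have : (a j : ℝ) + 1 = d := by linarith
    exact_mod_cast this
  have all : ∀ n : ℕ, yval d q a (j + n) = 1 := by
    intro n
    induction n with
    | zero => simpa using h
    | succ n ih => simpa [add_assoc] using (key _ ih).1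
  have hi : yval d q a i = 1 := by
    have := all (i - j).val
    simpa using this
  exact ⟨hi, (key i hi).2⟩

lemma sigmad_yval (d q : ℕ) (hd : 2 ≤ d) (hq : 2 ≤ q) (a : ZMod q → ℕ)
    (hlt : ∀ j, yval d q a j < 1) (j : ZMod q) :
    sigmad d (yval d q a j) = yval d q a (j + 1) := by
  unfold sigmad
  rw [yval_rec d q hd hq, Int.fract_natCast_add]
  exact Int.fract_eq_self.2 ⟨yval_nonneg d q hd hq a _, hlt _⟩

lemma iter_yval (d q : ℕ) (hd : 2 ≤ d) (hq : 2 ≤ q) (a : ZMod q → ℕ)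
    (hlt : ∀ j, yval d q a j < 1) (n : ℕ) :
    (sigmad d)^[n] (yval d q a 0) = yval d q a n := by
  induction n with
  | zero => simp
  | succ n ih =>
    rw [Function.iterate_succ_apply', ih, sigmad_yval d q hd hq a hlt]
    push_cast; rfl

lemma orbit_yval (d q : ℕ) (hd : 2 ≤ d) (hq : 2 ≤ q) (a : ZMod q → ℕ)
    (hlt : ∀ j, yval d q a j < 1) :
    sigmaOrbit d (yval d q a 0) = Set.range (yval d q a) := by
  have : NeZero q := ⟨by omega⟩
  ext s
  simp only [sigmaOrbit, iter_yval d q hd hq a hlt, Set.mem_ofPred_eq, Set.mem_range]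
  constructor
  · rintro ⟨k, h⟩; exact ⟨_, h⟩
  · rintro ⟨k, h⟩; exact ⟨k.val, by simpa using h⟩

lemma orbit_zero (d : ℕ) : sigmaOrbit d 0 = {0} := by
  have h : ∀ n : ℕ, (sigmad d)^[n] 0 = 0 := by
    intro n
    induction n with
    | zero => rfl
    | succ n ih => rw [Function.iterate_succ_apply', ih]; simp [sigmad]
  ext s
  simp [sigmaOrbit, h, eq_comm]

lemma val_succ (q : ℕ) (hq : 2 ≤ q) (k : ZMod q) (hk : k ≠ -1) : (k + 1).val = k.val + 1 := by
  have : NeZero q := ⟨by omega⟩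
  have : Fact (1 < q) := ⟨by omega⟩
  have h1 : (1 : ZMod q).val = 1 := ZMod.val_one q
  have : k.val + 1 < q := by
    by_contra! h
    have h2 : k.val + 1 = q := by have := ZMod.val_lt k; omega
    apply hk
    have h3 : ((k.val + 1 : ℕ) : ZMod q) = 0 := by rw [h2]; simp
    push_cast at h3
    rw [ZMod.natCast_zmod_val] at h3
    exact eq_neg_of_add_eq_zero_left h3
  rw [ZMod.val_add_of_lt (by rw [h1]; exact this), h1]

lemma mono_of_step (q : ℕ) (hq : 2 ≤ q) (x : ZMod q → ℝ) (h : ∀ k, k ≠ -1 → x k < x (k + 1))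
    (i j : ZMod q) (hij : i.val < j.val) : x i < x j := by
  have : NeZero q := ⟨by omega⟩
  have key : ∀ n : ℕ, i.val + n + 1 < q → x i < x ((i.val + n + 1 : ℕ) : ZMod q) := by
    have st : ∀ n : ℕ, n + 1 < q → x (n : ZMod q) < x ((n + 1 : ℕ) : ZMod q) := by
      intro n hn
      have := h (n : ZMod q) (by
        intro h0
        have : ((n + 1 : ℕ) : ZMod q) = 0 := by push_cast; rw [h0]; ring
        rw [ZMod.natCast_eq_zero_iff] at this
        exact absurd (Nat.le_of_dvd (by omega) this) (by omega))
      push_cast; exact this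
    intro n
    induction n with
    | zero => intro hn; simpa using st i.val (by simpa using hn)
    | succ n ih => intro hn; exact (ih (by omega)).trans (st _ hn)
  have hj := ZMod.val_lt j
  have := key (j.val - i.val - 1) (by omega)
  rw [show i.val + (j.val - i.val - 1) + 1 = j.val by omega] at this
  simpa using this

theorem stmt9 (d q p : ℕ) (hd : 2 ≤ d) (hq : 2 ≤ q)
    (hp1 : 1 ≤ p) (hp2 : p ≤ q - 1) (hpq : Nat.gcd p q = 1)
    (a : ZMod q → ℕ) (ha : ∀ j, a j < d) :
    -- LHS: `t = tuplePoint d q a` is the least element of its orbit `O`, and `O`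
    -- is a `σ_d`-rotational orbit with rotation number `p/q`
    ((∀ x ∈ sigmaOrbit d (tuplePoint d q a), tuplePoint d q a ≤ x) ∧
      ∃ u : ZMod q → ℝ,
        Set.range u = sigmaOrbit d (tuplePoint d q a) ∧
        IsRotational d q ((p : ℕ) : ZMod q) u) ↔
    -- RHS: `a_0 ≤ a_{p*} ≤ a_{2p*} ≤ ⋯ ≤ a_{(q-1)p*}`, with the inequality between
    -- `a_{kp*}` and `a_{(k+1)p*}` strict at `k = q-p-1`, i.e. `a_{-(p+1)p*} < a_{-p·p*}`
    ((∀ k : ℕ, k + 1 < q →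
        a ((k : ZMod q) * ((p : ZMod q))⁻¹) ≤
        a (((k + 1 : ℕ) : ZMod q) * ((p : ZMod q))⁻¹)) ∧
      a ((-((p : ZMod q) + 1)) * ((p : ZMod q))⁻¹) <
        a ((-(p : ZMod q)) * ((p : ZMod q))⁻¹)) := by
  have : NeZero q := ⟨by omega⟩
  have hunit : (p : ZMod q) * ((p : ZMod q))⁻¹ = 1 := ZMod.coe_mul_inv_eq_one p hpq
  have hd2 : (2:ℝ) ≤ d := by exact_mod_cast hd
  set P : ZMod q := (p : ZMod q) with hP
  have hP0 : P ≠ 0 := by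
    intro h0
    rw [hP, ZMod.natCast_eq_zero_iff] at h0
    exact absurd (Nat.le_of_dvd (by omega) h0) (by omega)
  have hne1 : ∀ n : ℕ, n + 1 < q → (n : ZMod q) ≠ -1 := by
    intro n hn h0
    have : ((n + 1 : ℕ) : ZMod q) = 0 := by push_cast; rw [h0]; ring
    rw [ZMod.natCast_eq_zero_iff] at this
    exact absurd (Nat.le_of_dvd (by omega) this) (by omega)
  have hneP : -(P + 1) ≠ -1 := by
    intro h0; apply hP0; linear_combination -h0
  -- the points listed in order
  have hx : ∀ k : ZMod q, (d : ℝ) * yval d q a (k * P⁻¹) =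
      a (k * P⁻¹) + yval d q a ((k + P) * P⁻¹) := by
    intro k
    rw [yval_rec d q hd hq, add_mul k, hunit]
  by_cases hall : ∃ j, yval d q a j = 1
  · obtain ⟨j, hj⟩ := hall
    have hall := yval_all d q hd hq a ha j hj
    have ht : tuplePoint d q a = 0 := by rw [tuplePoint_eq, (hall 0).1]; simp
    constructor
    · rintro ⟨-, u, hu, -, hmono, -⟩
      exfalso
      rw [ht, orbit_zero] at hu
      have h0 : ∀ i, u i = 0 := fun i => by
        have : u i ∈ Set.range u := ⟨i, rfl⟩
        rw [hu] at this; exact this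
      have : Fact (1 < q) := ⟨by omega⟩
      have := hmono 0 1 (by rw [ZMod.val_zero, ZMod.val_one]; omega)
      rw [h0, h0] at this
      exact lt_irrefl _ this
    · rintro ⟨-, h⟩
      have h1 := (hall (-(P + 1) * P⁻¹)).2
      have h2 := (hall (-P * P⁻¹)).2
      omega
  push Not at hall
  have hlt : ∀ j, yval d q a j < 1 := fun j =>
    lt_of_le_of_ne (yval_le_one d q hd hq a ha j) (hall j)
  have hnn := yval_nonneg d q hd hq a
  have ht : tuplePoint d q a = yval d q a 0 := by
    rw [tuplePoint_eq]; exact Int.fract_eq_self.2 ⟨hnn _, hlt _⟩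
  rw [ht, orbit_yval d q hd hq a hlt]
  constructor
  · rintro ⟨hmin, u, hu, hI, hmono, -, hrot⟩
    have hstep : ∀ k : ZMod q, k ≠ -1 → u k < u (k + 1) := fun k hk =>
      hmono _ _ (by rw [val_succ q hq k hk]; omega)
    have hu0le : ∀ i, u 0 ≤ u i := by
      intro i
      by_cases hi : i = 0
      · rw [hi]
      · refine (hmono 0 i ?_).le
        rw [ZMod.val_zero]
        exact Nat.pos_of_ne_zero fun h => hi ((ZMod.val_eq_zero i).1 h)
    have hu0 : u 0 = yval d q a 0 := by
      apply le_antisymm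
      · have : yval d q a 0 ∈ Set.range u := by rw [hu]; exact ⟨0, rfl⟩
        obtain ⟨i, hi⟩ := this
        rw [← hi]; exact hu0le i
      · apply hmin; rw [← hu]; exact ⟨0, rfl⟩
    have hun : ∀ n : ℕ, u (n * P) = yval d q a n := by
      intro n
      induction n with
      | zero => simpa using hu0
      | succ n ih =>
        have h1 := hrot (n * P)
        rw [ih, sigmad_yval d q hd hq a hlt] at h1
        push_cast
        rw [h1]; congr 1; ring
    have huk : ∀ k : ZMod q, u k = yval d q a (k * P⁻¹) := by
      intro k
      have h1 := hun (k * P⁻¹).val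
      rw [ZMod.natCast_zmod_val] at h1
      rw [← h1]; congr 1
      linear_combination -k * hunit
    simp only [← huk] at hx
    constructor
    · intro k hk
      have h1 := hstep k (hne1 k hk)
      have e1 := hx k
      have e2 := hx (k + 1)
      have b1 := hI (k + P)
      have b2 := hI (k + 1 + P)
      push_cast
      by_contra! hcon
      have hcon' : (a ((k + 1) * P⁻¹) : ℝ) + 1 ≤ a (k * P⁻¹) := by exact_mod_cast hcon
      have := b1.1
      have := b2.2
      nlinarith
    · have h1 := hstep (-(P + 1)) hneP
      have e1 := hx (-(P + 1))
      have e2 := hx (-P)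
      rw [show -(P + 1) + 1 = -P by ring] at h1
      rw [show -(P + 1) + P = -1 by ring] at e1
      rw [show -P + P = 0 by ring] at e2
      have h2 := hu0le (-1)
      by_contra! hcon
      have hcon' : (a (-P * P⁻¹) : ℝ) ≤ a (-(P + 1) * P⁻¹) := by exact_mod_cast hcon
      nlinarith
  · rintro ⟨hchain, hstrict⟩
    have hc : ∀ k : ZMod q, k ≠ -1 → a (k * P⁻¹) ≤ a ((k + 1) * P⁻¹) := by
      intro k hk
      have h1 := val_succ q hq k hk
      have h2 := hchain k.val (by rw [← h1]; exact ZMod.val_lt _)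
      push_cast at h2
      rwa [ZMod.natCast_zmod_val] at h2
    have hD : ∀ n : ℕ, n + 1 < q →
        yval d q a ((-1 - (n + 1) * P) * P⁻¹) < yval d q a ((-1 - (n + 1) * P + 1) * P⁻¹) := by
      intro n
      induction n with
      | zero =>
        intro _
        have e1 := hx (-(P + 1))
        have e2 := hx (-P)
        rw [show -(P + 1) + P = -1 by ring] at e1
        rw [show -P + P = 0 by ring] at e2
        rw [show (-1 - (((0 : ℕ) : ZMod q) + 1) * P) = -(P + 1) by push_cast; ring,
          show -(P + 1) + 1 = -P by ring]
        have hs : (a (-(P + 1) * P⁻¹) : ℝ) + 1 ≤ a (-P * P⁻¹) := by exact_mod_cast hstrict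
        have := hlt (-1 * P⁻¹)
        have := hnn (0 * P⁻¹)
        nlinarith
      | succ n ih =>
        intro hn
        have ih := ih (by omega)
        have hk : (-1 - (((n + 1 : ℕ) : ZMod q) + 1) * P) ≠ -1 := by
          intro h0
          have h3 : (((n + 1 + 1 : ℕ)) : ZMod q) = 0 := by
            push_cast at h0 ⊢
            linear_combination -P⁻¹ * h0 - ((n : ZMod q) + 1 + 1) * hunit
          rw [ZMod.natCast_eq_zero_iff] at h3
          exact absurd (Nat.le_of_dvd (by omega) h3) (by omega)
        set K := (-1 - (((n + 1 : ℕ) : ZMod q) + 1) * P) with hK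
        have hKP : -1 - ((n : ZMod q) + 1) * P = K + P := by rw [hK]; push_cast; ring
        rw [hKP] at ih
        have e1 := hx K
        have e2 := hx (K + 1)
        rw [show K + 1 + P = K + P + 1 by ring] at e2
        have h4 : (a (K * P⁻¹) : ℝ) ≤ a ((K + 1) * P⁻¹) := by exact_mod_cast hc K hk
        nlinarith
    have hstep : ∀ k : ZMod q, k ≠ -1 → yval d q a (k * P⁻¹) < yval d q a ((k + 1) * P⁻¹) := by
      intro k hk
      set m : ZMod q := (-1 - k) * P⁻¹ - 1 with hm
      have hmne : m ≠ -1 := by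
        intro h0
        apply hk
        linear_combination (-1 - k) * hunit - P * h0 + P * hm
      have h1 := val_succ q hq m hmne
      have h2 := hD m.val (by rw [← h1]; exact ZMod.val_lt _)
      rw [ZMod.natCast_zmod_val, show -1 - (m + 1) * P = k by
        rw [hm]; linear_combination (1 + k) * hunit] at h2
      exact h2
    have hmono := mono_of_step q hq (fun k => yval d q a (k * P⁻¹)) hstep
    constructor
    · rintro _ ⟨j, rfl⟩
      by_cases hj : j = 0
      · rw [hj]
      · have h1 : j * P ≠ 0 := by
          intro h0; apply hj; linear_combination P⁻¹ * h0 - j * hunit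
        have h2 := hmono 0 (j * P) (by
          rw [ZMod.val_zero]
          exact Nat.pos_of_ne_zero fun h => h1 ((ZMod.val_eq_zero _).1 h))
        simp only [zero_mul, mul_assoc, hunit, mul_one] at h2
        exact h2.le
    · refine ⟨fun k => yval d q a (k * P⁻¹), ?_, fun i => ⟨hnn _, hlt _⟩, hmono, hP0, ?_⟩
      · ext s
        constructor
        · rintro ⟨k, rfl⟩; exact ⟨_, rfl⟩
        · rintro ⟨j, rfl⟩
          exact ⟨j * P, by simp only [mul_assoc, hunit, mul_one]⟩
      · intro i
        simp only [sigmad_yval d q hd hq a hlt, add_mul, hunit]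
end

section
/- Fix d ≥ 2 and a fraction p/q in lowest terms with q ≥ 2, 1 ≤ p ≤ q−1, gcd(p,q) = 1. For 1 ≤ i ≤ n, let O_i be pairwise distinct σ_d-rotational orbits with rotation number p/q, with representative sequences s_i = b_0^{(i)}, b_1^{(i)}, ..., b_{q-1}^{(i)}. Then A = O_1 ∪ ... ∪ O_n is σ_d-rotational with rotation number p/q if and only if the collection {s_1, ..., s_n} can be interlaced, i.e. after relabeling the orbits, the sequence b_0^{(1)}, b_0^{(2)}, ..., b_0^{(n)}, b_1^{(1)}, ..., b_1^{(n)}, ..., b_{q-1}^{(1)}, ..., b_{q-1}^{(n)} is nondecreasing (hence a (d−1)-sequence of length nq). -/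
/-- The `k`-th term (`0 ≤ k ≤ q-1`) of the representative sequence of the rotational orbit
whose least element has digits `a`: it is `a_{kp*}` for `0 ≤ k ≤ q-p-1` and
`a_{kp*} - 1` for `q-p ≤ k ≤ q-1`. -/
def repDigit (q p : ℕ) (a : ZMod q → ℕ) (k : ℕ) : ℕ :=
  if k ≤ q - p - 1 then a ((k : ZMod q) * ((p : ZMod q))⁻¹)
  else a ((k : ZMod q) * ((p : ZMod q))⁻¹) - 1

/-! ### Tuples of digits -/

noncomputable def tupVal (d q : ℕ) (a : ZMod q → ℕ) : ℝ :=
  (∑ i ∈ Finset.range q, (a (i : ZMod q) : ℝ) * (d : ℝ) ^ (q - 1 - i)) / ((d : ℝ) ^ q - 1)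

lemma pow_sub_one_pos' {d q : ℕ} (hd : 2 ≤ d) (hq : 2 ≤ q) : (0 : ℝ) < (d : ℝ) ^ q - 1 := by
  have h1 : (1 : ℝ) < d := by exact_mod_cast hd
  have := one_lt_pow₀ h1 (n := q) (by omega)
  linarith

lemma tupVal_shift {d q : ℕ} (hd : 2 ≤ d) (hq : 2 ≤ q) (a : ZMod q → ℕ) (m : ZMod q) :
    (d : ℝ) * tupVal d q (fun j => a (m + j)) = a m + tupVal d q (fun j => a (m + 1 + j)) := by
  have hpos := pow_sub_one_pos' hd hq
  unfold tupVal
  rw [← mul_div_assoc, div_eq_iff hpos.ne', add_mul, div_mul_cancel₀ _ hpos.ne']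
  obtain ⟨r, rfl⟩ : ∃ r, q = r + 1 := ⟨q - 1, by omega⟩
  rw [Finset.mul_sum, Finset.sum_range_succ', Finset.sum_range_succ]
  beta_reduce
  have e1 : ((r : ZMod (r+1)) : ZMod (r+1)) + 1 = 0 := by
    have := ZMod.natCast_self (r+1)
    push_cast at this; exact this
  have e2 : m + 1 + (r : ZMod (r+1)) = m := by
    rw [add_assoc, add_comm 1, e1, add_zero]
  rw [e2]
  have e3 : ∑ k ∈ Finset.range r, (d : ℝ) * ((a (m + ((k + 1 : ℕ) : ZMod (r+1))) : ℝ) * (d : ℝ) ^ (r + 1 - 1 - (k + 1)))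
      = ∑ x ∈ Finset.range r, (a (m + 1 + (x : ZMod (r+1))) : ℝ) * (d : ℝ) ^ (r + 1 - 1 - x) := by
    refine Finset.sum_congr rfl fun k hk => ?_
    have hk := Finset.mem_range.1 hk
    have : r + 1 - 1 - k = (r + 1 - 1 - (k + 1)) + 1 := by omega
    rw [this, pow_succ]
    have : m + ((k + 1 : ℕ) : ZMod (r+1)) = m + 1 + k := by push_cast; ring
    rw [this]; ring
  rw [e3]
  simp
  ring

lemma geom_aux (d q : ℕ) :
    ∑ i ∈ Finset.range q, ((d : ℝ) - 1) * (d : ℝ) ^ (q - 1 - i) = (d : ℝ) ^ q - 1 := by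
  rw [Finset.sum_range_reflect (fun i => ((d : ℝ) - 1) * (d : ℝ) ^ i) q, ← Finset.mul_sum,
    mul_comm, geom_sum_mul]

lemma tupVal_nonneg {d q : ℕ} (hd : 2 ≤ d) (hq : 2 ≤ q) (a : ZMod q → ℕ) : 0 ≤ tupVal d q a :=
  div_nonneg (Finset.sum_nonneg fun i _ => by positivity) (pow_sub_one_pos' hd hq).le

lemma tupVal_lt_one {d q : ℕ} (hd : 2 ≤ d) (hq : 2 ≤ q) (a : ZMod q → ℕ) (ha : ∀ j, a j < d)
    (hne : ∃ j, a j ≠ d - 1) : tupVal d q a < 1 := by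
  have : NeZero q := ⟨by omega⟩
  have hpos := pow_sub_one_pos' hd hq
  unfold tupVal
  rw [div_lt_one hpos, ← geom_aux d q]
  have hd0 : (0 : ℝ) < d := by exact_mod_cast (by omega : 0 < d)
  have key : ∀ j, (a j : ℝ) ≤ d - 1 := fun j => by
    have : a j + 1 ≤ d := ha j
    have : (a j : ℝ) + 1 ≤ d := by exact_mod_cast this
    linarith
  obtain ⟨j, hj⟩ := hne
  refine Finset.sum_lt_sum (fun i _ => mul_le_mul_of_nonneg_right (key _) (by positivity)) ?_
  refine ⟨j.val, Finset.mem_range.2 j.val_lt, ?_⟩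
  refine mul_lt_mul_of_pos_right ?_ (by positivity)
  rw [ZMod.natCast_zmod_val]
  have : a j + 1 < d := by have := ha j; omega
  have : (a j : ℝ) + 1 < d := by exact_mod_cast this
  linarith

lemma tupVal_top {d q : ℕ} (hd : 2 ≤ d) (hq : 2 ≤ q) (a : ZMod q → ℕ)
    (h : ∀ j, a j = d - 1) : tuplePoint d q a = 0 := by
  have hpos := pow_sub_one_pos' hd hq
  unfold tuplePoint
  have : ∑ i ∈ Finset.range q, (a (i : ZMod q) : ℝ) * (d : ℝ) ^ (q - 1 - i) = (d : ℝ) ^ q - 1 := by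
    rw [← geom_aux d q]
    refine Finset.sum_congr rfl fun i _ => ?_
    rw [h, Nat.cast_sub (by omega)]; simp
  rw [this, div_self hpos.ne']; simp

lemma sigmad_tup {d q : ℕ} (hd : 2 ≤ d) (hq : 2 ≤ q) (a : ZMod q → ℕ) (ha : ∀ j, a j < d)
    (hne : ∃ j, a j ≠ d - 1) (m : ℕ) :
    (sigmad d)^[m] (tuplePoint d q a) = tupVal d q (fun j => a (m + j)) := by
  have hb : ∀ m : ZMod q, tupVal d q (fun j => a (m + j)) < 1 := fun m =>
    tupVal_lt_one hd hq _ (fun j => ha _) (by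
      obtain ⟨j, hj⟩ := hne
      exact ⟨j - m, by simpa using hj⟩)
  induction m with
  | zero =>
    have := hb 0
    simp only [zero_add] at this
    simp only [Function.iterate_zero, id, Nat.cast_zero, zero_add]
    exact Int.fract_eq_self.2 ⟨tupVal_nonneg hd hq _, this⟩
  | succ m ih =>
    rw [Function.iterate_succ_apply', ih, sigmad, tupVal_shift hd hq, Int.fract_natCast_add]
    push_cast
    exact Int.fract_eq_self.2 ⟨tupVal_nonneg hd hq _, hb _⟩

lemma floor_tup {d q : ℕ} (hd : 2 ≤ d) (hq : 2 ≤ q) (a : ZMod q → ℕ) (ha : ∀ j, a j < d)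
    (hne : ∃ j, a j ≠ d - 1) (m : ℕ) :
    ⌊(d : ℝ) * (sigmad d)^[m] (tuplePoint d q a)⌋ = a m := by
  rw [sigmad_tup hd hq a ha hne, tupVal_shift hd hq, Int.floor_natCast_add]
  have : tupVal d q (fun j => a (m + 1 + j)) < 1 := tupVal_lt_one hd hq _ (fun j => ha _) (by
      obtain ⟨j, hj⟩ := hne
      exact ⟨j - (m + 1), by simpa using hj⟩)
  rw [Int.floor_eq_zero_iff.2 ⟨tupVal_nonneg hd hq _, this⟩, add_zero]

/-! ### Rotational sets -/

lemma rot_iter {d N : ℕ} {P : ZMod N} {u : ZMod N → ℝ} (h : IsRotational d N P u) (i : ZMod N)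
    (m : ℕ) : (sigmad d)^[m] (u i) = u (i + m * P) := by
  induction m with
  | zero => simp
  | succ m ih =>
    rw [Function.iterate_succ_apply', ih, h.2.2.2]
    congr 1; push_cast; ring

lemma rot_inj {d N : ℕ} [NeZero N] {P : ZMod N} {u : ZMod N → ℝ} (h : IsRotational d N P u) :
    Function.Injective u := by
  intro i j hij
  rcases lt_trichotomy i.val j.val with h1 | h1 | h1
  · exact absurd hij (h.2.1 _ _ h1).ne
  · exact ZMod.val_injective _ h1
  · exact absurd hij (h.2.1 _ _ h1).ne'

lemma rot_mono {d N : ℕ} [NeZero N] {P : ZMod N} {u : ZMod N → ℝ} (h : IsRotational d N P u)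
    {i j : ZMod N} (hij : i.val ≤ j.val) : u i ≤ u j := by
  rcases hij.lt_or_eq with h1 | h1
  · exact (h.2.1 _ _ h1).le
  · rw [ZMod.val_injective _ h1]

lemma cop_surj {q p : ℕ} [NeZero q] (hpq : Nat.gcd p q = 1) (k : ZMod q) :
    ((k * (p : ZMod q)⁻¹).val : ZMod q) * p = k := by
  rw [ZMod.natCast_zmod_val, mul_assoc, mul_comm _ (p : ZMod q), ZMod.coe_mul_inv_eq_one p hpq,
    mul_one]

lemma rot_range_subset {d q p : ℕ} [NeZero q] (hpq : Nat.gcd p q = 1) {u v : ZMod q → ℝ}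
    (hu : IsRotational d q p u) (hv : IsRotational d q p v) {k l : ZMod q} (h : u k = v l) :
    Set.range u ⊆ Set.range v := by
  rintro _ ⟨j, rfl⟩
  refine ⟨l + (((j - k) * (p : ZMod q)⁻¹).val : ℕ) * p, ?_⟩
  rw [← rot_iter hv, ← h, rot_iter hu, cop_surj hpq]
  congr 1; ring

lemma rot_range_eq {d q p : ℕ} [NeZero q] (hpq : Nat.gcd p q = 1) {u v : ZMod q → ℝ}
    (hu : IsRotational d q p u) (hv : IsRotational d q p v) {k l : ZMod q} (h : u k = v l) :
    Set.range u = Set.range v :=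
  (rot_range_subset hpq hu hv h).antisymm (rot_range_subset hpq hv hu h.symm)

lemma rot_unique {d N : ℕ} [NeZero N] {P : ZMod N} {u v : ZMod N → ℝ}
    (hu : IsRotational d N P u) (hv : IsRotational d N P v) (h : Set.range u = Set.range v) :
    u = v := by
  have key : ∀ w : ZMod N → ℝ, IsRotational d N P w →
      StrictMono (fun i : Fin N => w ((i : ℕ) : ZMod N)) := by
    intro w hw i j hij
    apply hw.2.1
    rw [ZMod.val_cast_of_lt i.2, ZMod.val_cast_of_lt j.2]
    exact hij
  have rg : ∀ w : ZMod N → ℝ, Set.range (fun i : Fin N => w ((i : ℕ) : ZMod N)) = Set.range w := by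
    intro w
    ext x; constructor
    · rintro ⟨i, rfl⟩; exact ⟨_, rfl⟩
    · rintro ⟨i, rfl⟩; exact ⟨⟨i.val, i.val_lt⟩, by simp⟩
  have := ((key u hu).range_inj (key v hv)).1 (by rw [rg, rg, h])
  funext i
  have h2 := congrFun this ⟨i.val, i.val_lt⟩
  simpa using h2

/-! ### Lifts to the line -/

noncomputable def liftX (N : ℕ) (u : ZMod N → ℝ) (j : ℤ) : ℝ := u (j : ZMod N) + ((j / N : ℤ) : ℝ)

noncomputable def liftC (d N P : ℕ) (u : ZMod N → ℝ) (j : ℤ) : ℤ :=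
  ⌊(d : ℝ) * u (j : ZMod N)⌋ + d * (j / N) - (j + P) / N

lemma liftX_add (N : ℕ) [NeZero N] (u : ZMod N → ℝ) (j : ℤ) :
    liftX N u (j + N) = liftX N u j + 1 := by
  have hN : (N : ℤ) ≠ 0 := by exact_mod_cast NeZero.ne N
  unfold liftX
  rw [Int.add_ediv_of_dvd_right dvd_rfl, Int.ediv_self hN]
  push_cast; simp; ring

lemma liftC_add (d N P : ℕ) [NeZero N] (u : ZMod N → ℝ) (j : ℤ) :
    liftC d N P u (j + N) = liftC d N P u j + d - 1 := by
  have hN : (N : ℤ) ≠ 0 := by exact_mod_cast NeZero.ne N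
  unfold liftC
  rw [add_right_comm, Int.add_ediv_of_dvd_right (dvd_refl (N : ℤ)),
    Int.add_ediv_of_dvd_right (dvd_refl (N : ℤ)), Int.ediv_self hN]
  push_cast; simp; ring

lemma liftX_eq {d N P : ℕ} {u : ZMod N → ℝ} (h : IsRotational d N P u) (j : ℤ) :
    (d : ℝ) * liftX N u j = liftX N u (j + P) + liftC d N P u j := by
  have h1 := h.2.2.2 (j : ZMod N)
  unfold sigmad Int.fract at h1
  unfold liftX liftC
  push_cast
  rw [← h1]; ring

lemma liftX_strictMono {d N : ℕ} [NeZero N] {P : ZMod N} {u : ZMod N → ℝ}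
    (h : IsRotational d N P u) : StrictMono (liftX N u) := by
  refine strictMono_int_of_lt_succ fun j => ?_
  have hN : (0 : ℤ) < N := by exact_mod_cast Nat.pos_of_ne_zero (NeZero.ne N)
  have v1 := ZMod.val_intCast (n := N) j
  have v2 := ZMod.val_intCast (n := N) (j + 1)
  have m0 := Int.emod_nonneg j hN.ne'
  have m1 := Int.emod_lt_of_pos j hN
  have dm := Int.emod_add_mul_ediv j N
  unfold liftX
  by_cases hc : j % N + 1 < N
  · have e1 : (j + 1) / (N : ℤ) = j / N := by
      rw [Int.ediv_eq_iff_of_pos hN] <;> constructor <;> nlinarith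
    have e2 : (j + 1) % (N : ℤ) = j % N + 1 := by
      have := Int.emod_add_mul_ediv (j + 1) N
      rw [e1] at this; linarith
    rw [e1]
    have := h.2.1 (j : ZMod N) ((j + 1 : ℤ) : ZMod N) (by omega)
    linarith
  · have e1 : (j + 1) / (N : ℤ) = j / N + 1 := by
      rw [Int.ediv_eq_iff_of_pos hN] <;> constructor <;> nlinarith
    rw [e1]
    have a1 := (h.1 (j : ZMod N)).2
    have a2 := (h.1 ((j + 1 : ℤ) : ZMod N)).1
    push_cast at *
    linarith

lemma liftC_mono {d N P : ℕ} [NeZero N] (hN : 2 ≤ N) {u : ZMod N → ℝ}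
    (h : IsRotational d N P u) : Monotone (liftC d N P u) := by
  refine monotone_int_of_le_succ fun j => ?_
  have h1 := liftX_eq h j
  have h2 := liftX_eq h (j + 1)
  have hs := liftX_strictMono h
  have s1 := hs (show j < j + 1 by omega)
  have s2 := hs (show j + 1 + P < j + P + N by omega)
  rw [liftX_add] at s2
  have hd : (0 : ℝ) ≤ d := by positivity
  have : (liftC d N P u j : ℝ) < liftC d N P u (j + 1) + 1 := by nlinarith
  have : liftC d N P u j < liftC d N P u (j + 1) + 1 := by exact_mod_cast this
  omega

lemma liftX_fract {d N : ℕ} {P : ZMod N} {u : ZMod N → ℝ} (h : IsRotational d N P u) (j : ℤ) :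
    Int.fract (liftX N u j) = u j := by
  unfold liftX
  rw [Int.fract_add_intCast]
  exact Int.fract_eq_self.2 ⟨(h.1 _).1, (h.1 _).2⟩

/-- Data about a single orbit. -/
lemma orbit_data {d q p : ℕ} (hd : 2 ≤ d) (hq : 2 ≤ q) (hp1 : 1 ≤ p) (hp2 : p ≤ q - 1)
    (hpq : Nat.gcd p q = 1) (a : ZMod q → ℕ) (ha : ∀ j, a j < d)
    (hleast : ∀ x ∈ sigmaOrbit d (tuplePoint d q a), tuplePoint d q a ≤ x)
    (u : ZMod q → ℝ) (hr : Set.range u = sigmaOrbit d (tuplePoint d q a))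
    (hu : IsRotational d q p u) :
    (∀ k : ℕ, k < q → (repDigit q p a k : ℤ) = liftC d q p u k) ∧
    0 ≤ liftC d q p u 0 ∧ liftC d q p u (q - 1) ≤ d - 2 := by
  have : NeZero q := ⟨by omega⟩
  have hne : ∃ j, a j ≠ d - 1 := by
    by_contra hcon
    push Not at hcon
    have h0 := tupVal_top hd hq a hcon
    have hz : ∀ k, u k = 0 := by
      intro k
      have : u k ∈ sigmaOrbit d (tuplePoint d q a) := hr ▸ ⟨k, rfl⟩
      obtain ⟨m, hm⟩ := this
      rw [← hm, h0]
      refine Function.iterate_fixed ?_ m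
      simp [sigmad]
    exact hu.2.2.1 (rot_inj hu ((hz _).trans (hz 0).symm))
  have h0 : u 0 = tuplePoint d q a := by
    apply le_antisymm
    · have : tuplePoint d q a ∈ Set.range u := hr ▸ ⟨0, rfl⟩
      obtain ⟨k, hk⟩ := this
      rw [← hk]
      exact rot_mono hu (by simp)
    · exact hleast _ (hr ▸ ⟨0, rfl⟩)
  have hfl : ∀ k : ZMod q, ⌊(d : ℝ) * u k⌋ = a (k * (p : ZMod q)⁻¹) := by
    intro k
    have h1 := floor_tup hd hq a ha hne (k * (p : ZMod q)⁻¹).val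
    rw [← h0, rot_iter hu, cop_surj hpq, zero_add, ZMod.natCast_zmod_val] at h1
    exact h1
  have hm := liftC_mono hq hu
  have hC0 : 0 ≤ liftC d q p u 0 := by
    unfold liftC
    rw [hfl]
    have : (0 + (p : ℤ)) / q = 0 := Int.ediv_eq_zero_of_lt (by omega) (by omega)
    rw [this]; simp
  have hdiv : ∀ k : ℕ, k < q → ((k : ℤ) + p) / q = if k ≤ q - p - 1 then 0 else 1 := by
    intro k hk
    split_ifs with hc
    · exact Int.ediv_eq_zero_of_lt (by omega) (by omega)
    · rw [Int.ediv_eq_iff_of_pos (by omega)]; constructor <;> omega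
  have hC : ∀ k : ℕ, k < q → liftC d q p u k =
      a ((k : ZMod q) * (p : ZMod q)⁻¹) - if k ≤ q - p - 1 then 0 else 1 := by
    intro k hk
    unfold liftC
    rw [hfl, hdiv k hk, Int.ediv_eq_zero_of_lt (by omega) (by omega)]
    simp
  refine ⟨fun k hk => ?_, hC0, ?_⟩
  · have hk0 : 0 ≤ liftC d q p u k := hC0.trans (hm (by omega))
    rw [hC k hk] at hk0 ⊢
    unfold repDigit
    split_ifs at * <;> omega
  · have := hC (q - 1) (by omega)
    rw [Nat.cast_sub (by omega), if_neg (by omega), Nat.cast_one] at this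
    rw [this]
    have := ha (((q - 1 : ℕ) : ZMod q) * (p : ZMod q)⁻¹)
    omega

lemma sub_rot {d q p n : ℕ} [NeZero q] (hq : 2 ≤ q) (hp1 : 1 ≤ p) (hp2 : p ≤ q - 1)
    (u : ZMod (n * q) → ℝ)
    (hu : IsRotational d (n * q) ((n * p : ℕ) : ZMod (n * q)) u) (i : ℕ) (hi : i < n) :
    IsRotational d q (p : ZMod q) (fun k => u ((i + n * k.val : ℕ) : ZMod (n * q))) := by
  have hval : ∀ k : ZMod q, ((i + n * k.val : ℕ) : ZMod (n * q)).val = i + n * k.val := by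
    intro k
    apply ZMod.val_cast_of_lt
    have := k.val_lt
    nlinarith
  refine ⟨fun k => hu.1 _, fun k l hkl => hu.2.1 _ _ ?_, ?_, fun k => ?_⟩
  · rw [hval, hval]
    have : n * k.val < n * l.val := Nat.mul_lt_mul_of_pos_left hkl (by omega)
    omega
  · intro h0
    rw [ZMod.natCast_eq_zero_iff] at h0
    have := Nat.le_of_dvd hp1 h0
    omega
  · beta_reduce
    rw [hu.2.2.2]
    congr 1
    rw [← Nat.cast_add, ZMod.natCast_eq_natCast_iff, add_assoc, ← mul_add]
    refine Nat.ModEq.add_left _ (Nat.ModEq.mul_left' _ ?_)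
    rw [← ZMod.natCast_eq_natCast_iff]
    simp

lemma div_aux (n q p j : ℕ) (hn : 1 ≤ n) : (j + n * p) / (n * q) = (j / n + p) / q := by
  rw [← Nat.div_div_eq_div_mul, Nat.add_mul_div_left _ _ (by omega)]

lemma forward_dir (d q p n : ℕ) (hd : 2 ≤ d) (hq : 2 ≤ q)
    (hp1 : 1 ≤ p) (hp2 : p ≤ q - 1) (hpq : Nat.gcd p q = 1) (hn : 1 ≤ n)
    (a : Fin n → ZMod q → ℕ) (ha : ∀ i j, a i j < d)
    (hleast : ∀ i, ∀ x ∈ sigmaOrbit d (tuplePoint d q (a i)), tuplePoint d q (a i) ≤ x)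
    (x : Fin n → ZMod q → ℝ)
    (hxr : ∀ i, Set.range (x i) = sigmaOrbit d (tuplePoint d q (a i)))
    (hx : ∀ i, IsRotational d q ((p : ℕ) : ZMod q) (x i))
    (u : ZMod (n * q) → ℝ)
    (hur : Set.range u = (⋃ i, sigmaOrbit d (tuplePoint d q (a i))))
    (hu : IsRotational d (n * q) ((n * p : ℕ) : ZMod (n * q)) u) :
    ∃ e : Equiv.Perm (Fin n), ∀ j : ℕ, j + 1 < n * q →
        repDigit q p (a (e ⟨j % n, Nat.mod_lt _ hn⟩)) (j / n) ≤
        repDigit q p (a (e ⟨(j + 1) % n, Nat.mod_lt _ hn⟩)) ((j + 1) / n) := by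
  have : NeZero q := ⟨by omega⟩
  have hN : 2 ≤ n * q := by nlinarith
  have : NeZero (n * q) := ⟨by omega⟩
  have hv := fun i : Fin n => sub_rot hq hp1 hp2 u hu i i.2
  have hmem : ∀ i : Fin n, ∃ l : Fin n, u ((i : ℕ) : ZMod (n * q)) ∈ Set.range (x l) := by
    intro i
    have : u ((i : ℕ) : ZMod (n * q)) ∈ Set.range u := ⟨_, rfl⟩
    rw [hur, Set.mem_iUnion] at this
    simpa only [hxr] using this
  choose e0 he0 using hmem
  have hve : ∀ i : Fin n, (fun k : ZMod q => u (((i : ℕ) + n * k.val : ℕ) : ZMod (n * q))) = x (e0 i) := by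
    intro i
    obtain ⟨k, hk⟩ := he0 i
    refine rot_unique (hv i) (hx _) (rot_range_eq hpq (hv i) (hx _) (k := 0) (l := k) ?_)
    rw [hk]; simp
  have hinj : Function.Injective e0 := by
    intro i i' h
    have h1 := (hve i).trans ((congrArg x h).trans (hve i').symm)
    have h2 := congrFun h1 0
    have h3 := rot_inj hu h2
    simp only [ZMod.val_zero, mul_zero, add_zero] at h3
    have h4 := congrArg ZMod.val h3
    rw [ZMod.val_cast_of_lt (by nlinarith [i.2]), ZMod.val_cast_of_lt (by nlinarith [i'.2])] at h4
    exact Fin.ext h4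
  have key : ∀ (j : ℕ) (hj : j < n * q),
      (repDigit q p (a (e0 ⟨j % n, Nat.mod_lt _ hn⟩)) (j / n) : ℤ)
        = liftC d (n * q) (n * p) u j := by
    intro j hj
    have hjn : j / n < q := Nat.div_lt_of_lt_mul hj
    rw [(orbit_data hd hq hp1 hp2 hpq _ (ha _) (hleast _) _ (hxr _) (hx _)).1 _ hjn, ← hve]
    unfold liftC
    beta_reduce
    rw [Int.cast_natCast, ZMod.val_cast_of_lt hjn, Int.cast_natCast, Nat.mod_add_div j n]
    have e1 : ((j : ℤ) / ((n * q : ℕ) : ℤ)) = 0 := Int.ediv_eq_zero_of_lt (by omega) (by omega)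
    have e2 : (((j / n : ℕ) : ℤ) / (q : ℤ)) = 0 :=
      Int.ediv_eq_zero_of_lt (Int.natCast_nonneg _) (by exact_mod_cast hjn)
    rw [e1, e2]
    have e3 := div_aux n q p j hn
    have e4 : ((j : ℤ) + ((n * p : ℕ) : ℤ)) / ((n * q : ℕ) : ℤ) = (((j / n : ℕ) : ℤ) + p) / q := by
      exact_mod_cast e3
    rw [e4]
  refine ⟨Equiv.ofBijective e0 (Finite.injective_iff_bijective.1 hinj), fun j hj => ?_⟩
  have hm := liftC_mono hN hu (show (j : ℤ) ≤ ((j + 1 : ℕ) : ℤ) by omega)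
  rw [← key j (by omega), ← key (j + 1) hj] at hm
  exact_mod_cast hm

lemma backward_dir (d q p n : ℕ) (hd : 2 ≤ d) (hq : 2 ≤ q)
    (hp1 : 1 ≤ p) (hp2 : p ≤ q - 1) (hpq : Nat.gcd p q = 1) (hn : 1 ≤ n)
    (a : Fin n → ZMod q → ℕ) (ha : ∀ i j, a i j < d)
    (hleast : ∀ i, ∀ x ∈ sigmaOrbit d (tuplePoint d q (a i)), tuplePoint d q (a i) ≤ x)
    (x : Fin n → ZMod q → ℝ)
    (hxr : ∀ i, Set.range (x i) = sigmaOrbit d (tuplePoint d q (a i)))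
    (hx : ∀ i, IsRotational d q ((p : ℕ) : ZMod q) (x i))
    (hdist : ∀ i j, i ≠ j →
      sigmaOrbit d (tuplePoint d q (a i)) ≠ sigmaOrbit d (tuplePoint d q (a j)))
    (e : Equiv.Perm (Fin n)) (he : ∀ j : ℕ, j + 1 < n * q →
        repDigit q p (a (e ⟨j % n, Nat.mod_lt _ hn⟩)) (j / n) ≤
        repDigit q p (a (e ⟨(j + 1) % n, Nat.mod_lt _ hn⟩)) ((j + 1) / n)) :
    ∃ u : ZMod (n * q) → ℝ,
        Set.range u = (⋃ i, sigmaOrbit d (tuplePoint d q (a i))) ∧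
        IsRotational d (n * q) ((n * p : ℕ) : ZMod (n * q)) u := by
  have : NeZero q := ⟨by omega⟩
  have hN : 2 ≤ n * q := by nlinarith
  have : NeZero (n * q) := ⟨by omega⟩
  have hn0 : (0 : ℤ) < n := by omega
  have hN0 : (0 : ℤ) < (n * q : ℕ) := by omega
  have data := fun i => orbit_data hd hq hp1 hp2 hpq _ (ha i) (hleast i) _ (hxr i) (hx i)
  obtain ⟨idx, hidx⟩ : ∃ idx : ℤ → Fin n, ∀ j, ((idx j : ℕ) : ℤ) = j % n := by
    refine ⟨fun j => ⟨(j % n).toNat, ?_⟩, fun j => ?_⟩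
    · have := Int.emod_lt_of_pos j hn0
      have := Int.emod_nonneg j hn0.ne'
      omega
    · have := Int.emod_nonneg j hn0.ne'
      simp only []
      omega
  have hidxN : ∀ j : ℕ, idx j = ⟨j % n, Nat.mod_lt _ hn⟩ := by
    intro j
    apply Fin.ext
    have := hidx j
    simp only []
    exact_mod_cast this
  have hidxadd : ∀ (j : ℤ) (m : ℕ), idx (j + (n * m : ℕ)) = idx j := by
    intro j m
    apply Fin.ext
    have h1 := hidx j
    have h2 := hidx (j + (n * m : ℕ))
    push_cast at h2
    rw [Int.add_mul_emod_self_left] at h2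
    push_cast
    omega
  have hdivadd : ∀ (j : ℤ) (m : ℕ), (j + (n * m : ℕ)) / n = j / n + m := by
    intro j m
    push_cast
    rw [Int.add_mul_ediv_left _ _ hn0.ne']
  obtain ⟨Y, hY⟩ : ∃ Y : ℤ → ℝ, ∀ j, Y j = liftX q (x (e (idx j))) (j / n) := ⟨_, fun _ => rfl⟩
  obtain ⟨C, hC⟩ : ∃ C : ℤ → ℤ, ∀ j, C j = liftC d q p (x (e (idx j))) (j / n) :=
    ⟨_, fun _ => rfl⟩
  have hYadd : ∀ j, Y (j + (n * q : ℕ)) = Y j + 1 := by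
    intro j
    rw [hY, hY, hidxadd, hdivadd, liftX_add]
  have hCadd : ∀ j, C (j + (n * q : ℕ)) = C j + d - 1 := by
    intro j
    rw [hC, hC, hidxadd, hdivadd, liftC_add]
  have hYC : ∀ j, (d : ℝ) * Y j = Y (j + (n * p : ℕ)) + C j := by
    intro j
    rw [hY, hY, hC, hidxadd, hdivadd, liftX_eq (hx _)]
  -- `C` is monotone
  have hCrep : ∀ j : ℕ, j < n * q →
      C j = (repDigit q p (a (e ⟨j % n, Nat.mod_lt _ hn⟩)) (j / n) : ℤ) := by
    intro j hj
    rw [(data _).1 _ (Nat.div_lt_of_lt_mul hj), hC, hidxN]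
    simp
  have per : ∀ (Q : ℤ → Prop), (∀ j, Q j ↔ Q (j + (n * q : ℕ))) →
      (∀ j : ℕ, j < n * q → Q j) → ∀ j, Q j := by
    intro Q hQ h0 j
    have hm : ∀ (m : ℕ) (j : ℤ), Q j ↔ Q (j + m * (n * q : ℕ)) := by
      intro m
      induction m with
      | zero => simp
      | succ m ih =>
        intro j
        rw [ih, hQ]
        have : j + (m : ℤ) * ((n * q : ℕ) : ℤ) + ((n * q : ℕ) : ℤ)
          = j + ((m + 1 : ℕ) : ℤ) * ((n * q : ℕ) : ℤ) := by push_cast; ring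
        rw [this]
    have h1 := Int.emod_nonneg j hN0.ne'
    have h2 := Int.emod_lt_of_pos j hN0
    have h3 := Int.emod_add_mul_ediv j (n * q : ℕ)
    have h4 := h0 (j % (n * q : ℕ)).toNat (by omega)
    rw [Int.toNat_of_nonneg h1] at h4
    rcases le_total 0 (j / (n * q : ℕ)) with hs | hs
    · rw [hm (j / (n * q : ℕ)).toNat, Int.toNat_of_nonneg hs,
        mul_comm (j / ((n * q : ℕ) : ℤ)), h3] at h4
      exact h4
    · rw [hm (-(j / (n * q : ℕ))).toNat, Int.toNat_of_nonneg (by omega)]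
      convert h4 using 1
      linarith
  have hCm : ∀ j, C j ≤ C (j + 1) := by
    apply per
    · intro j
      rw [hCadd, add_right_comm, hCadd]
      omega
    · intro j hj
      by_cases hj1 : j + 1 < n * q
      · have h1 := hCrep (j + 1) hj1
        rw [Nat.cast_succ] at h1
        rw [hCrep j hj, h1]
        exact_mod_cast he j hj1
      · have hjj : (j : ℤ) + 1 = 0 + (n * q : ℕ) := by omega
        have hdv : (j : ℤ) / n = q - 1 := by
          have : (j : ℤ) + 1 = n * q := by rw [hjj]; push_cast; ring
          rw [Int.ediv_eq_iff_of_pos hn0]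
          constructor <;> nlinarith
        rw [hjj, hCadd, hC, hC, hdv, Int.zero_ediv]
        have h1 := (data (e (idx j))).2.2
        have h2 := (data (e (idx 0))).2.1
        omega
  have hYm : ∀ j, Y j ≤ Y (j + 1) := by
    obtain ⟨j0, hj0, hmin⟩ := Finset.exists_min_image (Finset.range (n * q))
      (fun j : ℕ => Y (j + 1) - Y j) ⟨0, Finset.mem_range.2 (by omega)⟩
    have hmin' : ∀ j : ℤ, Y (j0 + 1) - Y j0 ≤ Y (j + 1) - Y j := by
      apply per
      · intro j
        rw [hYadd, add_right_comm, hYadd]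
        constructor <;> intro h <;> linarith
      · intro j hj
        exact hmin j (Finset.mem_range.2 hj)
    have h1 := hYC j0
    have h2 := hYC (j0 + 1)
    have h3 := hmin' (j0 + (n * p : ℕ))
    rw [add_right_comm] at h3
    have h4 : (C j0 : ℝ) ≤ C (j0 + 1) := by exact_mod_cast hCm j0
    have h5 : (2 : ℝ) ≤ d := by exact_mod_cast hd
    have h6 : 0 ≤ Y (j0 + 1) - Y j0 := by
      by_contra hneg
      push Not at hneg
      nlinarith
    intro j
    linarith [hmin' j]
  have hYfr : ∀ j, Int.fract (Y j) = x (e (idx j)) ((j / n : ℤ) : ZMod q) := by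
    intro j
    rw [hY, liftX_fract (hx _)]
  have hYs : StrictMono Y := by
    refine strictMono_int_of_lt_succ fun j => lt_of_le_of_ne (hYm j) fun heq => ?_
    by_cases hi : idx j = idx (j + 1)
    · rw [hY, hY, ← hi] at heq
      have h1 := (liftX_strictMono (hx _)).injective heq
      have h2 := hidx j
      rw [hi, hidx] at h2
      have h3 := Int.emod_add_mul_ediv j n
      have h4 := Int.emod_add_mul_ediv (j + 1) n
      rw [h2, ← h1] at h4
      omega
    · have h1 := hYfr j
      rw [heq, hYfr] at h1
      have h2 := rot_range_eq hpq (hx _) (hx _) h1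
      rw [hxr, hxr] at h2
      exact hdist _ _ (fun h => hi (e.injective h).symm) h2
  have hYr : ∀ j : ℕ, j < n * q → Y j = x (e (idx j)) ((j / n : ℕ) : ZMod q) := by
    intro j hj
    have hjn : j / n < q := Nat.div_lt_of_lt_mul hj
    rw [hY]
    unfold liftX
    have : (j : ℤ) / n / q = 0 := by
      have : j / n / q = 0 := Nat.div_eq_of_lt hjn
      exact_mod_cast this
    rw [this]
    have : (j : ℤ) / n = ((j / n : ℕ) : ℤ) := by simp
    rw [this, Int.cast_natCast, Int.cast_zero, add_zero]
  have hY01 : ∀ j : ℕ, j < n * q → Y j ∈ Set.Ico (0 : ℝ) 1 := by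
    intro j hj
    rw [hYr j hj]
    exact (hx _).1 _
  have hfrN : ∀ j : ℕ, Int.fract (Y j) = Y ((j : ZMod (n * q)).val : ℕ) := by
    intro j
    have h1 := hY01 _ ((j : ZMod (n * q)).val_lt)
    rw [← Int.fract_eq_self.2 ⟨h1.1, h1.2⟩, ZMod.val_natCast]
    have hmm : ∀ (m r : ℕ), Int.fract (Y (r + (n * q : ℕ) * m)) = Int.fract (Y r) := by
      intro m r
      induction m with
      | zero => simp
      | succ m ih =>
        have : (r : ℤ) + (n * q : ℕ) * ((m + 1 : ℕ) : ℤ) = r + (n * q : ℕ) * m + (n * q : ℕ) := by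
          push_cast; ring
        rw [this, hYadd, Int.fract_add_one, ih]
    rw [← hmm (j / (n * q)) (j % (n * q))]
    congr 2
    exact_mod_cast (Nat.mod_add_div j (n * q)).symm
  refine ⟨fun j => Y (j.val : ℕ), ?_, fun j => hY01 _ j.val_lt, fun i j hij => hYs (by omega), ?_,
    fun j => ?_⟩
  · ext y
    rw [Set.mem_iUnion]
    constructor
    · rintro ⟨j, rfl⟩
      refine ⟨e (idx j.val), ?_⟩
      beta_reduce
      rw [hYr _ j.val_lt, ← hxr]
      exact ⟨_, rfl⟩
    · rintro ⟨i, hi⟩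
      rw [← hxr] at hi
      obtain ⟨k, rfl⟩ := hi
      have hlt : (e.symm i : ℕ) + n * k.val < n * q := by
        have := k.val_lt
        have := (e.symm i).2
        nlinarith
      refine ⟨(((e.symm i : ℕ) + n * k.val : ℕ) : ZMod (n * q)), ?_⟩
      beta_reduce
      rw [ZMod.val_cast_of_lt hlt, hYr _ hlt, hidxN]
      have h1 : ((e.symm i : ℕ) + n * k.val) / n = k.val := by
        rw [Nat.add_mul_div_left _ _ (by omega), Nat.div_eq_of_lt (e.symm i).2, zero_add]
      have h2 : (⟨((e.symm i : ℕ) + n * k.val) % n, Nat.mod_lt _ hn⟩ : Fin n)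
          = e.symm i := by
        apply Fin.ext
        simp only [Nat.add_mul_mod_self_left]
        exact Nat.mod_eq_of_lt (e.symm i).2
      rw [h1, h2]
      simp
  · intro h0
    rw [ZMod.natCast_eq_zero_iff] at h0
    have := Nat.le_of_dvd (by nlinarith) h0
    have : n * p < n * q := Nat.mul_lt_mul_of_pos_left (by omega) (by omega)
    omega
  · beta_reduce
    unfold sigmad
    rw [hYC, Int.fract_add_intCast, ← Nat.cast_add, hfrN]
    simp

theorem stmt10 (d q p n : ℕ) (hd : 2 ≤ d) (hq : 2 ≤ q)
    (hp1 : 1 ≤ p) (hp2 : p ≤ q - 1) (hpq : Nat.gcd p q = 1) (hn : 1 ≤ n)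
    -- for each `i`, `O_i` is the orbit of the point with digits `a i`, which is the
    -- least element of `O_i` (so that `repDigit q p (a i)` is the representative
    -- sequence `s_i` of `O_i`) …
    (a : Fin n → ZMod q → ℕ) (ha : ∀ i j, a i j < d)
    (hleast : ∀ i, ∀ x ∈ sigmaOrbit d (tuplePoint d q (a i)), tuplePoint d q (a i) ≤ x)
    -- … and `O_i` is a `σ_d`-rotational orbit with rotation number `p/q`
    (hrot : ∀ i, ∃ u : ZMod q → ℝ,
      Set.range u = sigmaOrbit d (tuplePoint d q (a i)) ∧
      IsRotational d q ((p : ℕ) : ZMod q) u)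
    -- the orbits are pairwise distinct
    (hdist : ∀ i j, i ≠ j →
      sigmaOrbit d (tuplePoint d q (a i)) ≠ sigmaOrbit d (tuplePoint d q (a j))) :
    -- LHS: `A = O_1 ∪ ⋯ ∪ O_n` is `σ_d`-rotational with rotation number `p/q`
    -- (i.e. rotation number `np/(nq)` for its `nq` elements)
    (∃ u : ZMod (n * q) → ℝ,
        Set.range u = (⋃ i, sigmaOrbit d (tuplePoint d q (a i))) ∧
        IsRotational d (n * q) ((n * p : ℕ) : ZMod (n * q)) u) ↔
    -- RHS: after relabeling the orbits by a permutation `e`, the interleaved sequence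
    -- of the representative sequences (position `j = k·n + i` carries the digit
    -- `b_k^{(e(i))}`) is nondecreasing
    (∃ e : Equiv.Perm (Fin n), ∀ j : ℕ, j + 1 < n * q →
        repDigit q p (a (e ⟨j % n, Nat.mod_lt _ (by omega)⟩)) (j / n) ≤
        repDigit q p (a (e ⟨(j + 1) % n, Nat.mod_lt _ (by omega)⟩)) ((j + 1) / n)) := by
  choose x hxr hx using hrot
  constructor
  · rintro ⟨u, hur, hu⟩
    exact forward_dir d q p n hd hq hp1 hp2 hpq hn a ha hleast x hxr hx u hur hu
  · rintro ⟨e, he⟩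
    exact backward_dir d q p n hd hq hp1 hp2 hpq hn a ha hleast x hxr hx hdist e he
end
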